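/- For every 3-way cutting scheme ((Ω, 𝒜, μ), c) and every real number τ, if μ{ω : c(ω)(x) ≠ c(ω)(y)} ≤ τ·(1/2)·∑_{i=1}^3 |x_i − y_i| holds for all x, y ∈ Δ_3, then τ ≥ 12/11. (In words: the minimal maximum density for 3 terminals satisfies τ_3* ≥ 12/11, so the integrality gap of the geometric relaxation is exactly 12/11.) -/

import Mathlib

open MeasureTheory

namespace Cut

/-- Sum over all triples of naturals with sum `n`. -/
noncomputable def T (n : ℕ) (f : ℕ → ℕ → ℕ → ℝ) : ℝ :=
  ∑ p ∈ Finset.HasAntidiagonal.antidiagonal n, ∑ r ∈ Finset.HasAntidiagonal.antidiagonal p.2, f p.1 r.1 r.2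

lemma T_cyc (n : ℕ) (f : ℕ → ℕ → ℕ → ℝ) : T n f = T n (fun i j k => f k i j) := by
  unfold T
  rw [Finset.sum_sigma', Finset.sum_sigma']
  refine Finset.sum_nbij' (fun x => ⟨(x.2.1, x.2.2 + x.1.1), (x.2.2, x.1.1)⟩)
    (fun x => ⟨(x.2.2, x.1.1 + x.2.1), (x.1.1, x.2.1)⟩) ?_ ?_ ?_ ?_ ?_
  · rintro ⟨⟨a, b⟩, ⟨c, d⟩⟩ h
    simp only [Finset.mem_sigma, Finset.HasAntidiagonal.mem_antidiagonal] at h ⊢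
    refine ⟨?_, ?_⟩ <;> first | trivial | omega
  · rintro ⟨⟨a, b⟩, ⟨c, d⟩⟩ h
    simp only [Finset.mem_sigma, Finset.HasAntidiagonal.mem_antidiagonal] at h ⊢
    refine ⟨?_, ?_⟩ <;> first | trivial | omega
  · rintro ⟨⟨a, b⟩, ⟨c, d⟩⟩ h
    simp only [Finset.mem_sigma, Finset.HasAntidiagonal.mem_antidiagonal] at h ⊢
    obtain ⟨h1, h2⟩ := h
    subst h2
    rfl
  · rintro ⟨⟨a, b⟩, ⟨c, d⟩⟩ h
    simp only [Finset.mem_sigma, Finset.HasAntidiagonal.mem_antidiagonal] at h ⊢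
    obtain ⟨h1, h2⟩ := h
    subst h2
    simp
  · rintro ⟨⟨a, b⟩, ⟨c, d⟩⟩ h
    rfl

lemma T_succ1 (n : ℕ) (f : ℕ → ℕ → ℕ → ℝ) :
    T (n+1) f = (∑ r ∈ Finset.HasAntidiagonal.antidiagonal (n+1), f 0 r.1 r.2) + T n (fun i j k => f (i+1) j k) := by
  unfold T
  rw [Finset.Nat.sum_antidiagonal_succ]

lemma T_succ3 (n : ℕ) (f : ℕ → ℕ → ℕ → ℝ) :
    T (n+1) f = (∑ r ∈ Finset.HasAntidiagonal.antidiagonal (n+1), f r.1 r.2 0) + T n (fun i j k => f i j (k+1)) := by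
  rw [T_cyc, T_cyc, T_succ1, T_cyc n (fun i j k => f i j (k+1)), T_cyc n (fun i j k => f k i (j+1))]

lemma T_succ2 (n : ℕ) (f : ℕ → ℕ → ℕ → ℝ) :
    T (n+1) f = (∑ r ∈ Finset.HasAntidiagonal.antidiagonal (n+1), f r.2 0 r.1) + T n (fun i j k => f i (j+1) k) := by
  rw [T_cyc, T_succ1, T_cyc n (fun i j k => f i (j+1) k)]

lemma T_add (n : ℕ) (f g : ℕ → ℕ → ℕ → ℝ) :
    T n (fun i j k => f i j k + g i j k) = T n f + T n g := by
  simp [T, Finset.sum_add_distrib]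

lemma T_le (n : ℕ) (f g : ℕ → ℕ → ℕ → ℝ) (h : ∀ i j k, i + j + k = n → f i j k ≤ g i j k) :
    T n f ≤ T n g := by
  unfold T
  refine Finset.sum_le_sum fun p hp => Finset.sum_le_sum fun r hr => h _ _ _ ?_
  simp only [Finset.HasAntidiagonal.mem_antidiagonal] at hp hr
  omega

lemma T_mul (n : ℕ) (a : ℝ) (f : ℕ → ℕ → ℕ → ℝ) :
    T n (fun i j k => a * f i j k) = a * T n f := by
  simp [T, Finset.mul_sum]

/-- disagreement indicator -/
def d (a b : Fin 3) : ℝ := if a = b then 0 else 1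

/-- the calibration: `s c` is the sum of the `c`-coordinates of the two end points -/
def G (q : ℝ) (a b : Fin 3) (s : Fin 3 → ℝ) : ℝ :=
  if a = b then 0 else if b = a + 1 then (4*q-1) - 2 * s (a+2) else -((4*q-1) - 2 * s (a+1))

lemma d_nonneg (a b : Fin 3) : 0 ≤ d a b := by unfold d; split_ifs <;> norm_num

lemma up_ineq (q x y z : ℝ) (h : x + y + z + 1 = 3 * q) (a b c : Fin 3) :
    G q a b ![2*x+1, 2*y+1, 2*z] + G q b c ![2*x, 2*y+1, 2*z+1] + G q c a ![2*x+1, 2*y, 2*z+1]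
      ≤ d a b + d b c + d c a := by
  fin_cases a <;> fin_cases b <;> fin_cases c <;> simp [G, d] <;> linarith

lemma down_ineq (q x y z : ℝ) (h : x + y + z + 2 = 3 * q) (a b c : Fin 3) :
    -(G q b a ![2*x+1, 2*y+1, 2*(z+1)] + G q c b ![2*(x+1), 2*y+1, 2*z+1]
      + G q a c ![2*x+1, 2*(y+1), 2*z+1])
      ≤ d b a + d c b + d a c := by
  fin_cases a <;> fin_cases b <;> fin_cases c <;> simp [G, d] <;> linarith

def psi (q : ℝ) (m : Fin 3) : ℝ := if m = 0 then 0 else if m = 1 then 2 * (4*q-1) else 4*q-1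

lemma side1 (q x y : ℝ) (h : x + y + 1 = 3 * q) (hq : 1 ≤ q) (hx : x ≤ 2*q) (hy : y ≤ 2 * q)
    (a b : Fin 3) :
    psi q b - psi q a ≤ 4 * q * d a b + G q a b ![2*x+1, 2*y+1, 0] := by
  fin_cases a <;> fin_cases b <;> simp [G, d, psi] <;> linarith

lemma side2 (q x y : ℝ) (h : x + y + 1 = 3 * q) (hq : 1 ≤ q) (hx : x ≤ 2*q) (hy : y ≤ 2 * q)
    (a b : Fin 3) :
    psi q (b+2) - psi q (a+2) ≤ 4 * q * d a b + G q a b ![0, 2*x+1, 2*y+1] := by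
  fin_cases a <;> fin_cases b <;> simp [G, d, psi] <;> linarith

lemma side3 (q x y : ℝ) (h : x + y + 1 = 3 * q) (hq : 1 ≤ q) (hx : x ≤ 2*q) (hy : y ≤ 2 * q)
    (a b : Fin 3) :
    psi q (b+1) - psi q (a+1) ≤ 4 * q * d a b + G q a b ![2*y+1, 0, 2*x+1] := by
  fin_cases a <;> fin_cases b <;> simp [G, d, psi] <;> linarith

lemma tele (n : ℕ) (f : ℕ → ℕ → ℝ) :
    ∑ r ∈ Finset.HasAntidiagonal.antidiagonal n, (f r.1 (r.2+1) - f (r.1+1) r.2) = f 0 (n+1) - f (n+1) 0 := by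
  have h1 := Finset.Nat.sum_antidiagonal_succ (n := n) (f := fun p : ℕ × ℕ => f p.1 p.2)
  have h2 := Finset.Nat.sum_antidiagonal_succ' (n := n) (f := fun p : ℕ × ℕ => f p.1 p.2)
  rw [Finset.sum_sub_distrib]
  simp only at h1 h2
  linarith

theorem comb (q n : ℕ) (hn : n + 2 = 3 * q) (L : ℕ → ℕ → ℕ → Fin 3)
    (h0 : ∀ i j k, i + j + k = 3 * q → 2 * q < i → L i j k = 0)
    (h1 : ∀ i j k, i + j + k = 3 * q → 2 * q < j → L i j k = 1)
    (h2 : ∀ i j k, i + j + k = 3 * q → 2 * q < k → L i j k = 2) :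
    24 * (q : ℝ) - 6 ≤ 2 * T (n+1) (fun i j k => d (L (i+1) j k) (L i (j+1) k)
        + d (L i (j+1) k) (L i j (k+1)) + d (L i j (k+1)) (L (i+1) j k))
      + 4 * q * (∑ r ∈ Finset.HasAntidiagonal.antidiagonal (n+1),
        (d (L (r.1+1) r.2 0) (L r.1 (r.2+1) 0) + d (L 0 (r.1+1) r.2) (L 0 r.1 (r.2+1))
          + d (L r.2 0 (r.1+1)) (L (r.2+1) 0 r.1))) := by
  have hq : 1 ≤ q := by omega
  have hqR : (1:ℝ) ≤ q := by exact_mod_cast hq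
  have hnR : (n:ℝ) + 2 = 3 * q := by exact_mod_cast hn
  set DA : ℕ → ℕ → ℕ → ℝ := fun i j k => d (L (i+1) j k) (L i (j+1) k) with hDA
  set DB : ℕ → ℕ → ℕ → ℝ := fun i j k => d (L i (j+1) k) (L i j (k+1)) with hDB
  set DC : ℕ → ℕ → ℕ → ℝ := fun i j k => d (L i j (k+1)) (L (i+1) j k) with hDC
  set A : ℕ → ℕ → ℕ → ℝ := fun i j k =>
    G q (L (i+1) j k) (L i (j+1) k) ![2*i+1, 2*j+1, 2*k] with hA
  set B : ℕ → ℕ → ℕ → ℝ := fun i j k =>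
    G q (L i (j+1) k) (L i j (k+1)) ![2*i, 2*j+1, 2*k+1] with hB
  set C : ℕ → ℕ → ℕ → ℝ := fun i j k =>
    G q (L i j (k+1)) (L (i+1) j k) ![2*i+1, 2*j, 2*k+1] with hC
  have up : T (n+1) A + T (n+1) B + T (n+1) C ≤ T (n+1) DA + T (n+1) DB + T (n+1) DC := by
    simp only [← T_add]
    refine T_le _ _ _ fun i j k h => ?_
    have hR : (i:ℝ) + j + k + 1 = 3 * q := by
      have : i + j + k + 1 = 3 * q := by omega
      exact_mod_cast this
    exact up_ineq q i j k hR _ _ _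
  have down : 0 ≤ T n (fun i j k => A i j (k+1)) + T n (fun i j k => B (i+1) j k)
      + T n (fun i j k => C i (j+1) k) + T n (fun i j k => DA i j (k+1))
      + T n (fun i j k => DB (i+1) j k) + T n (fun i j k => DC i (j+1) k) := by
    simp only [← T_add]
    have : T n (fun _ _ _ => 0) = 0 := by simp [T]
    rw [← this]
    refine T_le _ _ _ fun i j k h => ?_
    have hR : (i:ℝ) + j + k + 2 = 3 * q := by
      have : i + j + k + 2 = 3 * q := by omega
      exact_mod_cast this
    have := down_ineq q i j k hR (L i (j+1) (k+1)) (L (i+1) j (k+1)) (L (i+1) (j+1) k)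
    simp only [hA, hB, hC, hDA, hDB, hDC]
    push_cast
    linarith
  have eA := T_succ3 n A
  have eB := T_succ1 n B
  have eC := T_succ2 n C
  have fA := T_succ3 n DA
  have fB := T_succ1 n DB
  have fC := T_succ2 n DC
  have pA : 0 ≤ ∑ r ∈ Finset.HasAntidiagonal.antidiagonal (n+1), DA r.1 r.2 0 :=
    Finset.sum_nonneg fun r _ => d_nonneg _ _
  have pB : 0 ≤ ∑ r ∈ Finset.HasAntidiagonal.antidiagonal (n+1), DB 0 r.1 r.2 :=
    Finset.sum_nonneg fun r _ => d_nonneg _ _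
  have pC : 0 ≤ ∑ r ∈ Finset.HasAntidiagonal.antidiagonal (n+1), DC r.2 0 r.1 :=
    Finset.sum_nonneg fun r _ => d_nonneg _ _
  have key : ∀ (a b : Fin 3) (s : Fin 3 → ℝ) (e : Fin 3), a = b →
      psi q (b+e) - psi q (a+e) ≤ 4 * q * d a b + G q a b s := by
    intro a b s e hab
    simp [hab, d, G]
  have sA : 2 * (4 * (q:ℝ) - 1) ≤ 4 * q * (∑ r ∈ Finset.HasAntidiagonal.antidiagonal (n+1), DA r.1 r.2 0)
      + ∑ r ∈ Finset.HasAntidiagonal.antidiagonal (n+1), A r.1 r.2 0 := by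
    have t := tele (n+1) (fun i j => psi q (L i j 0 + 0))
    rw [h0 (n+1+1) 0 0 (by omega) (by omega), h1 0 (n+1+1) 0 (by omega) (by omega)] at t
    rw [Finset.mul_sum, ← Finset.sum_add_distrib]
    have t2 : 2 * (4 * (q:ℝ) - 1) = psi q (1 + 0) - psi q (0 + 0) := by simp [psi]
    rw [t2, ← t]
    refine Finset.sum_le_sum fun r hr => ?_
    obtain ⟨i, j⟩ := r
    rw [Finset.HasAntidiagonal.mem_antidiagonal] at hr
    simp only at hr ⊢
    by_cases hi : 2 * q < i
    · exact key _ _ _ 0 (by rw [h0 _ _ _ (by omega) (by omega), h0 _ _ _ (by omega) (by omega)])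
    by_cases hj : 2 * q < j
    · exact key _ _ _ 0 (by rw [h1 _ _ _ (by omega) (by omega), h1 _ _ _ (by omega) (by omega)])
    have hi' : (i:ℝ) ≤ 2 * q := by exact_mod_cast not_lt.mp hi
    have hj' : (j:ℝ) ≤ 2 * q := by exact_mod_cast not_lt.mp hj
    have hR : (i:ℝ) + j + 1 = 3 * q := by
      have : i + j + 1 = 3 * q := by omega
      exact_mod_cast this
    have := side1 q i j hR hqR hi' hj' (L (i+1) j 0) (L i (j+1) 0)
    simpa [hA, hDA] using this
  have sB : 2 * (4 * (q:ℝ) - 1) ≤ 4 * q * (∑ r ∈ Finset.HasAntidiagonal.antidiagonal (n+1), DB 0 r.1 r.2)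
      + ∑ r ∈ Finset.HasAntidiagonal.antidiagonal (n+1), B 0 r.1 r.2 := by
    have t := tele (n+1) (fun i j => psi q (L 0 i j + 2))
    rw [h1 0 (n+1+1) 0 (by omega) (by omega), h2 0 0 (n+1+1) (by omega) (by omega)] at t
    rw [Finset.mul_sum, ← Finset.sum_add_distrib]
    have t2 : 2 * (4 * (q:ℝ) - 1) = psi q (2 + 2) - psi q (1 + 2) := by simp [psi]
    rw [t2, ← t]
    refine Finset.sum_le_sum fun r hr => ?_
    obtain ⟨i, j⟩ := r
    rw [Finset.HasAntidiagonal.mem_antidiagonal] at hr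
    simp only at hr ⊢
    by_cases hi : 2 * q < i
    · exact key _ _ _ 2 (by rw [h1 _ _ _ (by omega) (by omega), h1 _ _ _ (by omega) (by omega)])
    by_cases hj : 2 * q < j
    · exact key _ _ _ 2 (by rw [h2 _ _ _ (by omega) (by omega), h2 _ _ _ (by omega) (by omega)])
    have hi' : (i:ℝ) ≤ 2 * q := by exact_mod_cast not_lt.mp hi
    have hj' : (j:ℝ) ≤ 2 * q := by exact_mod_cast not_lt.mp hj
    have hR : (i:ℝ) + j + 1 = 3 * q := by
      have : i + j + 1 = 3 * q := by omega
      exact_mod_cast this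
    have := side2 q i j hR hqR hi' hj' (L 0 (i+1) j) (L 0 i (j+1))
    simpa [hB, hDB] using this
  have sC : 2 * (4 * (q:ℝ) - 1) ≤ 4 * q * (∑ r ∈ Finset.HasAntidiagonal.antidiagonal (n+1), DC r.2 0 r.1)
      + ∑ r ∈ Finset.HasAntidiagonal.antidiagonal (n+1), C r.2 0 r.1 := by
    have t := tele (n+1) (fun i j => psi q (L j 0 i + 1))
    rw [h2 0 0 (n+1+1) (by omega) (by omega), h0 (n+1+1) 0 0 (by omega) (by omega)] at t
    rw [Finset.mul_sum, ← Finset.sum_add_distrib]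
    have t2 : 2 * (4 * (q:ℝ) - 1) = psi q (0 + 1) - psi q (2 + 1) := by simp [psi]
    rw [t2, ← t]
    refine Finset.sum_le_sum fun r hr => ?_
    obtain ⟨i, j⟩ := r
    rw [Finset.HasAntidiagonal.mem_antidiagonal] at hr
    simp only at hr ⊢
    by_cases hi : 2 * q < i
    · exact key _ _ _ 1 (by rw [h2 _ _ _ (by omega) (by omega), h2 _ _ _ (by omega) (by omega)])
    by_cases hj : 2 * q < j
    · exact key _ _ _ 1 (by rw [h0 _ _ _ (by omega) (by omega), h0 _ _ _ (by omega) (by omega)])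
    have hi' : (i:ℝ) ≤ 2 * q := by exact_mod_cast not_lt.mp hi
    have hj' : (j:ℝ) ≤ 2 * q := by exact_mod_cast not_lt.mp hj
    have hR : (i:ℝ) + j + 1 = 3 * q := by
      have : i + j + 1 = 3 * q := by omega
      exact_mod_cast this
    have := side3 q i j hR hqR hi' hj' (L j 0 (i+1)) (L (j+1) 0 i)
    simpa [hC, hDC] using this
  have g1 : T (n+1) (fun i j k => d (L (i+1) j k) (L i (j+1) k)
        + d (L i (j+1) k) (L i j (k+1)) + d (L i j (k+1)) (L (i+1) j k))
      = T (n+1) DA + T (n+1) DB + T (n+1) DC := by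
    rw [← T_add, ← T_add]
  have g2 : (∑ r ∈ Finset.HasAntidiagonal.antidiagonal (n+1),
        (d (L (r.1+1) r.2 0) (L r.1 (r.2+1) 0) + d (L 0 (r.1+1) r.2) (L 0 r.1 (r.2+1))
          + d (L r.2 0 (r.1+1)) (L (r.2+1) 0 r.1)))
      = (∑ r ∈ Finset.HasAntidiagonal.antidiagonal (n+1), DA r.1 r.2 0)
        + (∑ r ∈ Finset.HasAntidiagonal.antidiagonal (n+1), DB 0 r.1 r.2)
        + (∑ r ∈ Finset.HasAntidiagonal.antidiagonal (n+1), DC r.2 0 r.1) := by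
    rw [← Finset.sum_add_distrib, ← Finset.sum_add_distrib]
  rw [g1, g2]
  linarith

noncomputable def P (q i j k : ℕ) : Fin 3 → ℝ :=
  if 2 * q < i then Pi.single 0 1 else if 2 * q < j then Pi.single 1 1 else
  if 2 * q < k then Pi.single 2 1 else ![(i:ℝ) / (3*q), (j:ℝ) / (3*q), (k:ℝ) / (3*q)]

noncomputable def len (x y : Fin 3 → ℝ) : ℝ := (1 / 2) * ∑ i, |x i - y i|

lemma P_mem (q i j k : ℕ) (hq : 1 ≤ q) (h : i + j + k = 3 * q) :
    P q i j k ∈ stdSimplex ℝ (Fin 3) := by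
  unfold P
  split_ifs
  · exact single_mem_stdSimplex ℝ _
  · exact single_mem_stdSimplex ℝ _
  · exact single_mem_stdSimplex ℝ _
  · have hqR : (1:ℝ) ≤ q := by exact_mod_cast hq
    have hR : (i:ℝ) + j + k = 3 * q := by exact_mod_cast h
    refine ⟨fun c => ?_, ?_⟩
    · fin_cases c <;> simp <;> positivity
    · simp only [Fin.sum_univ_three]
      simp
      field_simp
      linarith

lemma P_rot (q i j k : ℕ) (h : i + j + k = 3 * q) : P q i j k = fun c => P q j k i (c + 2) := by
  unfold P
  by_cases hi : 2 * q < i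
  · have hj : ¬ 2 * q < j := by omega
    have hk : ¬ 2 * q < k := by omega
    funext c
    fin_cases c <;> simp [hi, hj, hk]
  by_cases hj : 2 * q < j
  · have hk : ¬ 2 * q < k := by omega
    funext c
    fin_cases c <;> simp [hi, hj]
  by_cases hk : 2 * q < k
  · funext c
    fin_cases c <;> simp [hi, hj, hk]
  · funext c
    fin_cases c <;> simp [hi, hj, hk]

lemma len_rot (q i j k i' j' k' : ℕ) (h : i + j + k = 3 * q) (h' : i' + j' + k' = 3 * q) :
    len (P q i j k) (P q i' j' k') = len (P q j k i) (P q j' k' i') := by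
  rw [P_rot q i j k h, P_rot q i' j' k' h']
  unfold len
  simp only [Fin.sum_univ_three]
  simp
  ring

/-- scaled length of the edge `(i+1,j,k) - (i,j+1,k)` -/
def e (q i j k : ℕ) : ℝ :=
  if 2 * q < k ∨ 2 * q < i ∨ 2 * q < j then 0 else if i = 2 * q ∨ j = 2 * q then q else 1

lemma len_self (x : Fin 3 → ℝ) : len x x = 0 := by simp [len]

lemma len_e0 (x y z : ℝ) (hy : 0 ≤ y) (hz : 0 ≤ z) (hx : x ≤ 1) (h : x + y + z = 1) :
    len (Pi.single 0 1) ![x, y, z] = 1 - x := by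
  unfold len
  simp only [Fin.sum_univ_three]
  simp
  rw [abs_of_nonneg hy, abs_of_nonneg hz, abs_of_nonneg (by linarith)]
  linarith

lemma len_e1 (x y z : ℝ) (hx : 0 ≤ x) (hz : 0 ≤ z) (hy : y ≤ 1) (h : x + y + z = 1) :
    len ![x, y, z] (Pi.single 1 1) = 1 - y := by
  unfold len
  simp only [Fin.sum_univ_three]
  simp
  rw [abs_of_nonneg hx, abs_of_nonneg hz, abs_of_nonpos (by linarith)]
  linarith

lemma len_A (q i j k : ℕ) (hq : 1 ≤ q) (h : i + j + k + 1 = 3 * q) :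
    len (P q (i+1) j k) (P q i (j+1) k) = e q i j k / (3 * q) := by
  have hqR : (1:ℝ) ≤ q := by exact_mod_cast hq
  have hR : (i:ℝ) + j + k + 1 = 3 * q := by exact_mod_cast h
  have q0 : (q:ℝ) ≠ 0 := by positivity
  by_cases hk : 2 * q < k
  · have a1 : ¬ 2 * q < i + 1 := by omega
    have a2 : ¬ 2 * q < i := by omega
    have a3 : ¬ 2 * q < j + 1 := by omega
    have a4 : ¬ 2 * q < j := by omega
    simp [P, e, hk, a1, a2, a3, a4, len_self]
  by_cases hi : 2 * q < i
  · have a1 : 2 * q < i + 1 := by omega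
    simp [P, e, hi, a1, len_self]
  by_cases hj : 2 * q < j
  · have a1 : 2 * q < j + 1 := by omega
    have a2 : ¬ 2 * q < i + 1 := by omega
    simp [P, e, hi, hj, a1, a2, len_self]
  by_cases hi2 : i = 2 * q
  · have a1 : 2 * q < i + 1 := by omega
    have a2 : ¬ 2 * q < j + 1 := by omega
    have hiR : (i:ℝ) = 2 * q := by exact_mod_cast hi2
    have e1 : P q (i+1) j k = Pi.single 0 1 := by simp [P, a1]
    have e2 : P q i (j+1) k = ![(i:ℝ) / (3*q), ((j+1 : ℕ):ℝ) / (3*q), (k:ℝ) / (3*q)] := by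
      simp [P, hi, hk, a2]
    have e3 : e q i j k = q := by
      unfold e
      rw [if_neg (by omega), if_pos (by omega)]
    rw [e1, e2, e3, len_e0 _ _ _ (by positivity) (by positivity), hiR]
    · field_simp; norm_num
    · rw [div_le_one (by positivity)]; linarith
    · push_cast
      field_simp
      linarith
  by_cases hj2 : j = 2 * q
  · have a1 : 2 * q < j + 1 := by omega
    have a2 : ¬ 2 * q < i + 1 := by omega
    have hjR : (j:ℝ) = 2 * q := by exact_mod_cast hj2
    have e1 : P q i (j+1) k = Pi.single 1 1 := by simp [P, a1, hi]
    have e2 : P q (i+1) j k = ![((i+1 : ℕ):ℝ) / (3*q), (j:ℝ) / (3*q), (k:ℝ) / (3*q)] := by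
      simp [P, hj, hk, a2]
    have e3 : e q i j k = q := by
      unfold e
      rw [if_neg (by omega), if_pos (by omega)]
    rw [e1, e2, e3, len_e1 _ _ _ (by positivity) (by positivity), hjR]
    · field_simp; norm_num
    · rw [div_le_one (by positivity)]; linarith
    · push_cast
      field_simp
      linarith
  · have a1 : ¬ 2 * q < j + 1 := by omega
    have a2 : ¬ 2 * q < i + 1 := by omega
    have e3 : e q i j k = 1 := by
      unfold e
      rw [if_neg (by omega), if_neg (by omega)]
    have e1 : P q i (j+1) k = ![(i:ℝ) / (3*q), (j:ℝ) / (3*q) + 1 / (3*q), (k:ℝ) / (3*q)] := by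
      simp [P, hi, hk, a1, add_div]
    have e2 : P q (i+1) j k = ![(i:ℝ) / (3*q) + 1 / (3*q), (j:ℝ) / (3*q), (k:ℝ) / (3*q)] := by
      simp [P, hj, hk, a2, add_div]
    rw [e1, e2, e3]
    unfold len
    have h0 : (0:ℝ) ≤ 1 / (3*q) := by positivity
    generalize (1:ℝ) / (3*q) = t at h0 ⊢
    simp only [Fin.sum_univ_three]
    simp
    rw [abs_of_nonneg h0]
    ring

lemma len_B (q i j k : ℕ) (hq : 1 ≤ q) (h : i + j + k + 1 = 3 * q) :
    len (P q i (j+1) k) (P q i j (k+1)) = e q j k i / (3 * q) := by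
  rw [len_rot _ _ _ _ _ _ _ (by omega) (by omega), len_A _ _ _ _ hq (by omega)]

lemma len_C (q i j k : ℕ) (hq : 1 ≤ q) (h : i + j + k + 1 = 3 * q) :
    len (P q i j (k+1)) (P q (i+1) j k) = e q k i j / (3 * q) := by
  rw [len_rot _ _ _ _ _ _ _ (by omega) (by omega), len_B _ _ _ _ hq (by omega)]

def v (q i : ℕ) : ℝ := if i < 2 * q then 1 else if i = 2 * q then 2 * q - 1 else -2

noncomputable def u (q i : ℕ) : ℝ := if i < 2 * q then 1/2 else if i = 2 * q then q - 1/2 else -1/2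

lemma e_zero (q i j k : ℕ) (h : 2 * q < k ∨ 2 * q < i ∨ 2 * q < j) : e q i j k = 0 := by
  rw [e, if_pos h]

lemma e_mid (q i j k : ℕ) (h : ¬ (2 * q < k ∨ 2 * q < i ∨ 2 * q < j)) (h' : i = 2 * q ∨ j = 2 * q) :
    e q i j k = q := by
  rw [e, if_neg h, if_pos h']

lemma e_one (q i j k : ℕ) (h : ¬ (2 * q < k ∨ 2 * q < i ∨ 2 * q < j))
    (h' : ¬ (i = 2 * q ∨ j = 2 * q)) : e q i j k = 1 := by
  rw [e, if_neg h, if_neg h']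

lemma v_lt (q i : ℕ) (h : i < 2 * q) : v q i = 1 := by rw [v, if_pos h]

lemma v_eq (q i : ℕ) (h : i = 2 * q) : v q i = 2 * q - 1 := by
  rw [v, if_neg (by omega), if_pos h]

lemma v_gt (q i : ℕ) (h : 2 * q < i) : v q i = -2 := by
  rw [v, if_neg (by omega), if_neg (by omega)]

lemma perim (q i j k : ℕ) (hq : 1 ≤ q) (h : i + j + k + 1 = 3 * q) :
    e q i j k + e q j k i + e q k i j ≤ v q i + v q j + v q k := by
  rcases lt_trichotomy i (2 * q) with hi | hi | hi
  · rcases lt_trichotomy j (2 * q) with hj | hj | hj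
    · rcases lt_trichotomy k (2 * q) with hk | hk | hk
      · rw [e_one _ _ _ _ (by omega) (by omega), e_one _ _ _ _ (by omega) (by omega),
          e_one _ _ _ _ (by omega) (by omega), v_lt _ _ hi, v_lt _ _ hj, v_lt _ _ hk]
      · rw [e_one q i j k (by omega) (by omega), e_mid _ _ _ _ (by omega) (by omega),
          e_mid _ _ _ _ (by omega) (by omega), v_lt _ _ hi, v_lt _ _ hj, v_eq _ _ hk]
        linarith
      · rw [e_zero _ _ _ _ (by omega), e_zero _ _ _ _ (by omega),
          e_zero _ _ _ _ (by omega), v_lt _ _ hi, v_lt _ _ hj, v_gt _ _ hk]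
        linarith
    · rw [e_mid q i j k (by omega) (by omega), e_mid q j k i (by omega) (by omega),
          e_one q k i j (by omega) (by omega), v_lt _ _ hi, v_eq _ _ hj, v_lt q k (by omega)]
      linarith
    · rw [e_zero _ _ _ _ (by omega), e_zero _ _ _ _ (by omega),
          e_zero _ _ _ _ (by omega), v_lt _ _ hi, v_gt _ _ hj, v_lt q k (by omega)]
      linarith
  · rw [e_mid q i j k (by omega) (by omega), e_one q j k i (by omega) (by omega),
          e_mid q k i j (by omega) (by omega), v_eq _ _ hi, v_lt q j (by omega), v_lt q k (by omega)]
    linarith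
  · rw [e_zero _ _ _ _ (by omega), e_zero _ _ _ _ (by omega),
          e_zero _ _ _ _ (by omega), v_gt _ _ hi, v_lt q j (by omega), v_lt q k (by omega)]
    linarith

lemma side_e (q i j : ℕ) (hq : 1 ≤ q) (h : i + j + 1 = 3 * q) :
    e q i j 0 ≤ u q i + u q j := by
  unfold e u
  split_ifs <;> first | omega | linarith

lemma sum_u (q : ℕ) (hq : 1 ≤ q) : ∑ i ∈ Finset.range (3 * q), u q i = 3 * q / 2 := by
  obtain ⟨m, rfl⟩ : ∃ m, q = m + 1 := ⟨q - 1, by omega⟩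
  have : 3 * (m+1) = 2 * (m+1) + (m + 1) := by ring
  rw [this, Finset.sum_range_add, Finset.sum_range_succ']
  have h1 : ∑ x ∈ Finset.range (2 * (m+1)), u (m+1) x = ∑ x ∈ Finset.range (2 * (m+1)), (1/2 : ℝ) :=
    Finset.sum_congr rfl fun x hx => by
      rw [Finset.mem_range] at hx
      simp [u, hx]
  have h2 : ∑ x ∈ Finset.range m, u (m+1) (2 * (m+1) + (x+1)) = ∑ x ∈ Finset.range m, (-1/2 : ℝ) :=
    Finset.sum_congr rfl fun x hx => by
      simp [u]
  have h3 : u (m+1) (2 * (m+1) + 0) = (m+1) - 1/2 := by simp [u]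
  rw [h1, h2, h3]
  simp
  ring

lemma sum_v (q : ℕ) (hq : 1 ≤ q) :
    ∑ i ∈ Finset.range (3 * q), (3 * (q:ℝ) - i) * v q i = 5 * q ^ 2 + q := by
  obtain ⟨m, rfl⟩ : ∃ m, q = m + 1 := ⟨q - 1, by omega⟩
  have : 3 * (m+1) = 2 * (m+1) + (m + 1) := by ring
  rw [this, Finset.sum_range_add, Finset.sum_range_succ']
  have h1 : ∑ x ∈ Finset.range (2 * (m+1)), (3 * ((m+1 : ℕ):ℝ) - x) * v (m+1) x
      = ∑ x ∈ Finset.range (2 * (m+1)), (3 * ((m:ℝ)+1) - x) :=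
    Finset.sum_congr rfl fun x hx => by
      rw [Finset.mem_range] at hx
      simp [v, hx]
  have h2 : ∑ x ∈ Finset.range m, (3 * ((m+1 : ℕ):ℝ) - (2 * (m+1) + (x+1) : ℕ)) * v (m+1) (2 * (m+1) + (x+1))
      = ∑ x ∈ Finset.range m, (2 * x - 2 * (m:ℝ)) :=
    Finset.sum_congr rfl fun x hx => by
      simp [v]
      ring
  have h3 : v (m+1) (2 * (m+1) + 0) = 2 * (m+1) - 1 := by simp [v]
  have gs : ∀ n : ℕ, ∑ x ∈ Finset.range n, (x:ℝ) = n * (n - 1) / 2 := by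
    intro n
    induction n with
    | zero => simp
    | succ n ih => rw [Finset.sum_range_succ, ih]; push_cast; ring
  rw [h1, h2, h3]
  simp only [Finset.sum_sub_distrib, ← Finset.mul_sum, gs]
  simp
  ring

lemma T_one (n : ℕ) (f : ℕ → ℝ) :
    T n (fun i _ _ => f i) = ∑ i ∈ Finset.range (n+1), ((n:ℝ) + 1 - i) * f i := by
  unfold T
  simp only [Finset.sum_const, Finset.Nat.card_antidiagonal, nsmul_eq_mul]
  rw [Finset.Nat.sum_antidiagonal_eq_sum_range_succ_mk]
  refine Finset.sum_congr rfl fun i hi => ?_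
  rw [Finset.mem_range] at hi
  have : i ≤ n := by omega
  push_cast [Nat.cast_sub this]
  ring

lemma T_v (q n : ℕ) (hn : n + 2 = 3 * q) :
    T (n+1) (fun i j k => v q i + v q j + v q k) = 3 * (5 * q ^ 2 + q) := by
  have hnR : (n:ℝ) + 2 = 3 * q := by exact_mod_cast hn
  have h1 : T (n+1) (fun i _ _ => v q i) = 5 * q ^ 2 + q := by
    rw [T_one, ← sum_v q (by omega)]
    have : n + 1 + 1 = 3 * q := by omega
    rw [this]
    refine Finset.sum_congr rfl fun i _ => ?_
    push_cast
    rw [← hnR]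
    ring
  have h3 := T_cyc (n+1) (fun i _ _ => v q i)
  have h2 := T_cyc (n+1) (fun _ _ k => v q k)
  rw [T_add, T_add]
  linarith

lemma side_sum (q n : ℕ) (hn : n + 2 = 3 * q) :
    ∑ r ∈ Finset.HasAntidiagonal.antidiagonal (n+1), e q r.1 r.2 0 ≤ 3 * q := by
  have h1 : ∑ r ∈ Finset.HasAntidiagonal.antidiagonal (n+1), e q r.1 r.2 0
      ≤ ∑ r ∈ Finset.HasAntidiagonal.antidiagonal (n+1), (u q r.1 + u q r.2) := by
    refine Finset.sum_le_sum fun r hr => ?_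
    rw [Finset.HasAntidiagonal.mem_antidiagonal] at hr
    exact side_e _ _ _ (by omega) (by omega)
  have h2 := sum_u q (by omega)
  have h3 : ∑ r ∈ Finset.HasAntidiagonal.antidiagonal (n+1), u q r.1 = 3 * q / 2 := by
    rw [Finset.Nat.sum_antidiagonal_eq_sum_range_succ_mk, ← h2, ← hn]
  have h4 : ∑ r ∈ Finset.HasAntidiagonal.antidiagonal (n+1), u q r.2 = 3 * q / 2 := by
    rw [← h3, ← Finset.Nat.sum_antidiagonal_swap]
    rfl
  rw [Finset.sum_add_distrib] at h1
  linarith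

section final
variable (Ω : Type) [MeasurableSpace Ω] (μ : Measure Ω) [IsProbabilityMeasure μ]
    (c : Ω → (Fin 3 → ℝ) → Fin 3)

lemma d_eq (x y : Fin 3 → ℝ) :
    (fun ω => d (c ω x) (c ω y)) = Set.indicator {ω : Ω | c ω x ≠ c ω y} (fun _ => (1:ℝ)) := by
  funext ω
  simp only [d, Set.indicator, Set.mem_ofPred_eq]
  split_ifs <;> simp_all

lemma d_int (x y : Fin 3 → ℝ) (h : MeasurableSet {ω : Ω | c ω x ≠ c ω y}) :
    Integrable (fun ω => d (c ω x) (c ω y)) μ := by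
  rw [d_eq]
  exact (integrable_const 1).indicator h

lemma d_val (x y : Fin 3 → ℝ) (h : MeasurableSet {ω : Ω | c ω x ≠ c ω y}) :
    ∫ ω, d (c ω x) (c ω y) ∂μ = (μ {ω : Ω | c ω x ≠ c ω y}).toReal := by
  rw [d_eq, integral_indicator_const _ h]
  simp [Measure.real]

lemma int3 (f g h : Ω → ℝ) (hf : Integrable f μ) (hg : Integrable g μ) (hh : Integrable h μ) :
    ∫ ω, (f ω + g ω + h ω) ∂μ = ∫ ω, f ω ∂μ + ∫ ω, g ω ∂μ + ∫ ω, h ω ∂μ := by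
  have h1 := integral_add (hf.add hg) hh
  have h2 := integral_add hf hg
  simp only [Pi.add_apply] at h1
  rw [h1, h2]

lemma T_int (n : ℕ) (f : Ω → ℕ → ℕ → ℕ → ℝ) (g : ℕ → ℕ → ℕ → ℝ)
    (hf : ∀ i j k, i + j + k = n → Integrable (fun ω => f ω i j k) μ)
    (hg : ∀ i j k, i + j + k = n → ∫ ω, f ω i j k ∂μ ≤ g i j k) :
    Integrable (fun ω => T n (f ω)) μ ∧ ∫ ω, T n (f ω) ∂μ ≤ T n g := by
  unfold T
  have key : ∀ p ∈ Finset.HasAntidiagonal.antidiagonal n,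
      ∀ r ∈ Finset.HasAntidiagonal.antidiagonal p.2, p.1 + r.1 + r.2 = n := by
    intro p hp r hr
    rw [Finset.HasAntidiagonal.mem_antidiagonal] at hp hr
    omega
  refine ⟨integrable_finsetSum _ fun p hp => integrable_finsetSum _ fun r hr =>
    hf _ _ _ (key p hp r hr), ?_⟩
  rw [integral_finsetSum _ fun p hp => integrable_finsetSum _ fun r hr =>
    hf _ _ _ (key p hp r hr)]
  refine Finset.sum_le_sum fun p hp => ?_
  rw [integral_finsetSum _ fun r hr => hf _ _ _ (key p hp r hr)]
  exact Finset.sum_le_sum fun r hr => hg _ _ _ (key p hp r hr)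

lemma bound
    (hterm : ∀ ω : Ω, ∀ i : Fin 3, c ω (Pi.single i 1) = i)
    (hmeas : ∀ x ∈ stdSimplex ℝ (Fin 3), ∀ y ∈ stdSimplex ℝ (Fin 3),
      MeasurableSet {ω : Ω | c ω x ≠ c ω y})
    (τ : ℝ) (hτ0 : 0 ≤ τ)
    (hτ : ∀ x ∈ stdSimplex ℝ (Fin 3), ∀ y ∈ stdSimplex ℝ (Fin 3),
      (μ {ω : Ω | c ω x ≠ c ω y}).toReal ≤ τ * ((1 / 2) * ∑ i, |x i - y i|))
    (q : ℕ) (hq : 1 ≤ q) : 24 * (q:ℝ) - 6 ≤ τ * (22 * q + 2) := by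
  obtain ⟨n, hn⟩ : ∃ n, n + 2 = 3 * q := ⟨3 * q - 2, by omega⟩
  have hqR : (1:ℝ) ≤ q := by exact_mod_cast hq
  have q0 : (0:ℝ) < 3 * q := by positivity
  have I : ∀ i j k i' j' k', i + j + k = 3 * q → i' + j' + k' = 3 * q →
      Integrable (fun ω => d (c ω (P q i j k)) (c ω (P q i' j' k'))) μ :=
    fun i j k i' j' k' h h' => d_int Ω μ c _ _ (hmeas _ (P_mem q _ _ _ hq h) _ (P_mem q _ _ _ hq h'))
  have V : ∀ i j k i' j' k', i + j + k = 3 * q → i' + j' + k' = 3 * q →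
      ∫ ω, d (c ω (P q i j k)) (c ω (P q i' j' k')) ∂μ ≤ τ * len (P q i j k) (P q i' j' k') := by
    intro i j k i' j' k' h h'
    rw [d_val Ω μ c _ _ (hmeas _ (P_mem q _ _ _ hq h) _ (P_mem q _ _ _ hq h'))]
    exact hτ _ (P_mem q _ _ _ hq h) _ (P_mem q _ _ _ hq h')
  have hcomb := fun ω => comb q n hn (fun i j k => c ω (P q i j k))
    (fun i j k h hi => by simp only [P, if_pos hi, hterm])
    (fun i j k h hj => by
      have : ¬ 2 * q < i := by omega
      simp only [P, if_neg this, if_pos hj, hterm])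
    (fun i j k h hk => by
      have h1 : ¬ 2 * q < i := by omega
      have h2 : ¬ 2 * q < j := by omega
      simp only [P, if_neg h1, if_neg h2, if_pos hk, hterm])
  have hT := T_int Ω μ (n+1) (fun ω i j k => d (c ω (P q (i+1) j k)) (c ω (P q i (j+1) k))
        + d (c ω (P q i (j+1) k)) (c ω (P q i j (k+1)))
        + d (c ω (P q i j (k+1))) (c ω (P q (i+1) j k)))
      (fun i j k => τ / (3 * q) * (v q i + v q j + v q k))
      (fun i j k h => ((I _ _ _ _ _ _ (by omega) (by omega)).add
        (I _ _ _ _ _ _ (by omega) (by omega))).add (I _ _ _ _ _ _ (by omega) (by omega)))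
      (fun i j k h => by
        have i1 := I (i+1) j k i (j+1) k (by omega) (by omega)
        have i2 := I i (j+1) k i j (k+1) (by omega) (by omega)
        have i3 := I i j (k+1) (i+1) j k (by omega) (by omega)
        have v1 := V (i+1) j k i (j+1) k (by omega) (by omega)
        have v2 := V i (j+1) k i j (k+1) (by omega) (by omega)
        have v3 := V i j (k+1) (i+1) j k (by omega) (by omega)
        rw [len_A _ _ _ _ hq (by omega)] at v1
        rw [len_B _ _ _ _ hq (by omega)] at v2
        rw [len_C _ _ _ _ hq (by omega)] at v3
        rw [int3 Ω μ _ _ _ i1 i2 i3]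
        have hp := mul_le_mul_of_nonneg_left (perim q i j k hq (by omega))
          (div_nonneg hτ0 q0.le)
        have e1 : τ / (3 * q) * (e q i j k + e q j k i + e q k i j)
          = τ * (e q i j k / (3 * q)) + τ * (e q j k i / (3 * q)) + τ * (e q k i j / (3 * q)) := by
          ring
        linarith)
  rw [T_mul, T_v q n hn] at hT
  have iS : ∀ r ∈ Finset.HasAntidiagonal.antidiagonal (n+1), Integrable (fun ω =>
        (d (c ω (P q (r.1+1) r.2 0)) (c ω (P q r.1 (r.2+1) 0))
          + d (c ω (P q 0 (r.1+1) r.2)) (c ω (P q 0 r.1 (r.2+1)))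
          + d (c ω (P q r.2 0 (r.1+1))) (c ω (P q (r.2+1) 0 r.1)))) μ := by
    intro r hr
    rw [Finset.HasAntidiagonal.mem_antidiagonal] at hr
    exact ((I _ _ _ _ _ _ (by omega) (by omega)).add
        (I _ _ _ _ _ _ (by omega) (by omega))).add (I _ _ _ _ _ _ (by omega) (by omega))
  have hS : ∫ ω, (∑ r ∈ Finset.HasAntidiagonal.antidiagonal (n+1),
        (d (c ω (P q (r.1+1) r.2 0)) (c ω (P q r.1 (r.2+1) 0))
          + d (c ω (P q 0 (r.1+1) r.2)) (c ω (P q 0 r.1 (r.2+1)))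
          + d (c ω (P q r.2 0 (r.1+1))) (c ω (P q (r.2+1) 0 r.1)))) ∂μ ≤ 3 * τ := by
    rw [integral_finsetSum _ iS]
    have : ∑ r ∈ Finset.HasAntidiagonal.antidiagonal (n+1), τ / q * e q r.1 r.2 0 ≤ 3 * τ := by
      rw [← Finset.mul_sum]
      have := mul_le_mul_of_nonneg_left (side_sum q n hn) (div_nonneg hτ0 (by linarith : (0:ℝ) ≤ q))
      have e1 : τ / q * (3 * q) = 3 * τ := by field_simp
      linarith
    refine le_trans (Finset.sum_le_sum fun r hr => ?_) this
    rw [Finset.HasAntidiagonal.mem_antidiagonal] at hr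
    obtain ⟨i, j⟩ := r
    simp only at hr ⊢
    have i1 := I (i+1) j 0 i (j+1) 0 (by omega) (by omega)
    have i2 := I 0 (i+1) j 0 i (j+1) (by omega) (by omega)
    have i3 := I j 0 (i+1) (j+1) 0 i (by omega) (by omega)
    have v1 := V (i+1) j 0 i (j+1) 0 (by omega) (by omega)
    have v2 := V 0 (i+1) j 0 i (j+1) (by omega) (by omega)
    have v3 := V j 0 (i+1) (j+1) 0 i (by omega) (by omega)
    rw [len_A _ _ _ _ hq (by omega)] at v1
    rw [len_B _ _ _ _ hq (by omega)] at v2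
    rw [len_C _ _ _ _ hq (by omega)] at v3
    rw [int3 Ω μ _ _ _ i1 i2 i3]
    have e1 : τ / q * e q i j 0 = τ * (e q i j 0 / (3 * q)) + τ * (e q i j 0 / (3 * q))
        + τ * (e q i j 0 / (3 * q)) := by
      field_simp
      ring
    linarith
  have iS' := integrable_finsetSum _ iS
  have fin := integral_mono (μ := μ) (integrable_const (24 * (q:ℝ) - 6))
    ((hT.1.const_mul 2).add (iS'.const_mul (4 * (q:ℝ)))) hcomb
  simp only [Pi.add_apply] at fin
  rw [integral_add (hT.1.const_mul 2) (iS'.const_mul (4 * (q:ℝ))), integral_const_mul,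
    integral_const_mul] at fin
  simp only [integral_const, probReal_univ, one_smul] at fin
  have h2 := mul_le_mul_of_nonneg_left hS (by linarith : (0:ℝ) ≤ 4 * q)
  have h3 := hT.2
  have e3 : τ / (3 * q) * (3 * (5 * (q:ℝ) ^ 2 + q)) = τ * (5 * q + 1) := by
    field_simp
  rw [e3] at h3
  linarith

end final

end Cut

/-- Every 3-way cutting scheme with maximum density at most `τ`
satisfies `τ ≥ 12/11`, i.e. the minimal maximum density (and hence the integrality gap
of the geometric relaxation) for three terminals is at least `12/11`. -/
theorem three_way_cutting_scheme_density_ge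
    (Ω : Type) [MeasurableSpace Ω] (μ : Measure Ω) [IsProbabilityMeasure μ]
    (c : Ω → (Fin 3 → ℝ) → Fin 3)
    (hterm : ∀ ω : Ω, ∀ i : Fin 3, c ω (Pi.single i 1) = i)
    (hmeas : ∀ x ∈ stdSimplex ℝ (Fin 3), ∀ y ∈ stdSimplex ℝ (Fin 3),
      MeasurableSet {ω : Ω | c ω x ≠ c ω y})
    (τ : ℝ)
    (hτ : ∀ x ∈ stdSimplex ℝ (Fin 3), ∀ y ∈ stdSimplex ℝ (Fin 3),
      (μ {ω : Ω | c ω x ≠ c ω y}).toReal ≤ τ * ((1 / 2) * ∑ i, |x i - y i|)) :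
    12 / 11 ≤ τ := by
  have hτ0 : 0 ≤ τ := by
    have h := hτ _ (single_mem_stdSimplex ℝ (0 : Fin 3)) _ (single_mem_stdSimplex ℝ (1 : Fin 3))
    have h2 : (0:ℝ) ≤ (μ {ω : Ω | c ω (Pi.single 0 1) ≠ c ω (Pi.single 1 1)}).toReal :=
      ENNReal.toReal_nonneg
    have h3 := h2.trans h
    simp only [Fin.sum_univ_three] at h3
    simp at h3
    linarith
  have hb := Cut.bound Ω μ c hterm hmeas τ hτ0 hτ
  by_contra hlt
  have hpos : 0 < 24 - 22 * τ := by linarith [not_le.mp hlt]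
  obtain ⟨m, hm⟩ := exists_nat_gt ((6 + 2 * τ) / (24 - 22 * τ))
  rw [div_lt_iff₀ hpos] at hm
  have := hb (m + 1) (by omega)
  push_cast at this
  nlinarith
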